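/- arXiv:1905.01202 — 2 statements merged into one kernel-verified Lean document; each statement's English description precedes it below -/
import Mathlib

section
/- Let X be a Banach space, U an evolution operator on X, P a family of projectors compatible with U with complementary family Q, V the associated map, and h, k growth rates. If the pair (U,P) is (h,k)-dichotomic, then the family of norms defined by |||x|||_t = sup_{τ ≥ t} (h(τ)/h(t))‖U(τ,t)P(t)x‖ + sup_{0 ≤ τ ≤ t} (k(t)/k(τ))‖V(t,τ)Q(t)x‖ is compatible with the family of projectors P; more precisely, each |||·|||_t is a norm on X and ‖x‖ ≤ |||x|||_t ≤ N(t)(‖P(t)x‖ + ‖Q(t)x‖) for all t ≥ 0, x ∈ X, where N is the nondecreasing function from the (h,k)-dichotomy property. -/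
open Set Filter Real

variable {X : Type*} [NormedAddCommGroup X] [NormedSpace ℝ X] [CompleteSpace X]

/-- `U : Δ → B(X)` is an evolution operator on `X`. -/
def EvolutionOperator (U : ℝ → ℝ → X →L[ℝ] X) : Prop :=
  (∀ t : ℝ, 0 ≤ t → U t t = ContinuousLinearMap.id ℝ X) ∧
  (∀ t s t₀ : ℝ, 0 ≤ t₀ → t₀ ≤ s → s ≤ t → U t t₀ = (U t s).comp (U s t₀))

/-- `P : ℝ₊ → B(X)` is a family of projectors on `X`. -/
def ProjectorFamily (P : ℝ → X →L[ℝ] X) : Prop :=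
  ∀ t : ℝ, 0 ≤ t → (P t).comp (P t) = P t

/-- `P` is invariant for the evolution operator `U`. -/
def InvariantFor (U : ℝ → ℝ → X →L[ℝ] X) (P : ℝ → X →L[ℝ] X) : Prop :=
  ∀ t s : ℝ, 0 ≤ s → s ≤ t → ∀ x : X, U t s (P s x) = P t (U t s x)

/-- `P` is compatible with `U` : it is invariant for `U` and for every `t ≥ s ≥ 0`
the restriction of `U t s` to `Ker P s` is an isomorphism from `Ker P s` onto
`Ker P t` (a bounded bijection between these closed subspaces of the Banach
space `X`, hence an isomorphism). -/
def CompatibleWith (U : ℝ → ℝ → X →L[ℝ] X) (P : ℝ → X →L[ℝ] X) : Prop :=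
  InvariantFor U P ∧
  ∀ t s : ℝ, 0 ≤ s → s ≤ t →
    Set.BijOn (U t s) {x : X | P s x = 0} {x : X | P t x = 0}

/-- a growth rate : a nondecreasing map `ℝ₊ → [1, ∞)` tending to `∞`. -/
def GrowthRate (h : ℝ → ℝ) : Prop :=
  MonotoneOn h (Ici (0 : ℝ)) ∧ (∀ t : ℝ, 0 ≤ t → 1 ≤ h t) ∧ Tendsto h atTop atTop

/-- a nondecreasing map `ℝ₊ → [1, ∞)`. -/
def Nondecr1 (N : ℝ → ℝ) : Prop :=
  MonotoneOn N (Ici (0 : ℝ)) ∧ ∀ t : ℝ, 0 ≤ t → 1 ≤ N t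

/-- the pair `(U, P)` is (nonuniformly) `(h,k)`-dichotomic; here
`Q t x = x - P t x` is the complementary family of projectors. -/
def Dichotomic (U : ℝ → ℝ → X →L[ℝ] X) (P : ℝ → X →L[ℝ] X) (h k : ℝ → ℝ) : Prop :=
  ∃ N : ℝ → ℝ, Nondecr1 N ∧
    ∀ t s : ℝ, 0 ≤ s → s ≤ t → ∀ x : X,
      h t * ‖U t s (P s x)‖ ≤ N s * (h s * ‖P s x‖) ∧
      k t * ‖x - P s x‖ ≤ N t * (k s * ‖U t s (x - P s x)‖)

/-- the pair `(U, P)` has `(h,k)`-growth. -/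
def HasGrowth (U : ℝ → ℝ → X →L[ℝ] X) (P : ℝ → X →L[ℝ] X) (h k : ℝ → ℝ) : Prop :=
  ∃ M : ℝ → ℝ, Nondecr1 M ∧
    ∀ t s : ℝ, 0 ≤ s → s ≤ t → ∀ x : X,
      h s * ‖U t s (P s x)‖ ≤ M s * (h t * ‖P s x‖) ∧
      k s * ‖x - P s x‖ ≤ M t * (k t * ‖U t s (x - P s x)‖)

/-- `f : X → ℝ` is a norm on `X`. -/
def IsNormOn (f : X → ℝ) : Prop :=
  (∀ x : X, 0 ≤ f x) ∧ (∀ x : X, f x = 0 ↔ x = 0) ∧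
  (∀ (a : ℝ) (x : X), f (a • x) = |a| * f x) ∧
  (∀ x y : X, f (x + y) ≤ f x + f y)

/-- a family of norms `{‖·‖_t : t ≥ 0}` compatible with the family of
projectors `P` (with complementary family `Q t x = x - P t x`). -/
def CompatibleNorms (P : ℝ → X →L[ℝ] X) (nn : ℝ → X → ℝ) : Prop :=
  (∀ t : ℝ, 0 ≤ t → IsNormOn (nn t)) ∧
  ∃ N : ℝ → ℝ, Nondecr1 N ∧
    ∀ t : ℝ, 0 ≤ t → ∀ x : X,
      ‖x‖ ≤ nn t x ∧ nn t x ≤ N t * (‖P t x‖ + ‖x - P t x‖)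

/-- the Lyapunov type family of norms built from the `(h,k)`-growth property:
`‖x‖_t = sup_{τ ≥ t} (h t / h τ)‖U(τ,t)P(t)x‖ + sup_{0 ≤ τ ≤ t} (k τ / k t)‖V(t,τ)Q(t)x‖`. -/
noncomputable def lyapG (U V : ℝ → ℝ → X →L[ℝ] X) (P : ℝ → X →L[ℝ] X)
    (h k : ℝ → ℝ) (t : ℝ) (x : X) : ℝ :=
  (⨆ τ : Ici t, (h t / h (τ : ℝ)) * ‖U (τ : ℝ) t (P t x)‖) +
  (⨆ τ : Icc (0 : ℝ) t, (k (τ : ℝ) / k t) * ‖V t (τ : ℝ) (x - P t x)‖)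

/-- the Lyapunov type family of norms built from the `(h,k)`-dichotomy property:
`|||x|||_t = sup_{τ ≥ t} (h τ / h t)‖U(τ,t)P(t)x‖ + sup_{0 ≤ τ ≤ t} (k t / k τ)‖V(t,τ)Q(t)x‖`. -/
noncomputable def lyapD (U V : ℝ → ℝ → X →L[ℝ] X) (P : ℝ → X →L[ℝ] X)
    (h k : ℝ → ℝ) (t : ℝ) (x : X) : ℝ :=
  (⨆ τ : Ici t, (h (τ : ℝ) / h t) * ‖U (τ : ℝ) t (P t x)‖) +
  (⨆ τ : Icc (0 : ℝ) t, (k t / k (τ : ℝ)) * ‖V t (τ : ℝ) (x - P t x)‖)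

/-!
At `τ = t` the two suprema have the terms `‖P t x‖` and `‖x - P t x‖`, so their sum dominates
`‖x‖`. Conversely, the stable dichotomy estimate at `x`, and the unstable one at
`V t τ (x - P t x)`, which lies in `Ker P τ` and is mapped back to `x - P t x` by `U t τ`, bound
every term of the suprema by `N t * ‖P t x‖` and `N t * ‖x - P t x‖`. The suprema are therefore
finite, hence seminorms, and domination of `‖x‖` makes their sum a norm.
-/

section WeightedSup

variable {𝕜 E F ι : Type*} [NormedField 𝕜] [AddCommGroup E] [Module 𝕜 E]
  [SeminormedAddCommGroup F] [NormedSpace 𝕜 F]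

/-- The seminorm `x ↦ ⨆ i, w i * ‖T i x‖` of a weighted family of linear maps, of which both
suprema of `lyapD` are instances. Negative weights are replaced by `0`, and the value is the junk
seminorm `0` unless the terms are bounded at every `x`. -/
noncomputable def weightedSupSeminorm (w : ι → ℝ) (T : ι → E →ₗ[𝕜] F) : Seminorm 𝕜 E :=
  ⨆ i, (w i).toNNReal • (normSeminorm 𝕜 F).comp (T i)

theorem weightedSupSeminorm_apply {w : ι → ℝ} {T : ι → E →ₗ[𝕜] F} (hw : ∀ i, 0 ≤ w i)
    (hbdd : ∀ x, BddAbove (range fun i ↦ w i * ‖T i x‖)) (x : E) :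
    weightedSupSeminorm w T x = ⨆ i, w i * ‖T i x‖ := by
  have hterm (i : ι) (y : E) :
      ((w i).toNNReal • (normSeminorm 𝕜 F).comp (T i)) y = w i * ‖T i y‖ := by
    rw [smul_apply, Seminorm.comp_apply, coe_normSeminorm, NNReal.smul_def, smul_eq_mul,
      Real.coe_toNNReal _ (hw i)]
  rw [weightedSupSeminorm, Seminorm.iSup_apply]
  · simp only [hterm]
  · simpa only [Seminorm.bddAbove_range_iff, hterm] using hbdd

end WeightedSup

theorem div_mul_le_mul_of_mul_le {R : Type*} [Field R] [LinearOrder R] [IsStrictOrderedRing R]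
    {a b c d n : R} (hb : 0 < b) (h : a * c ≤ n * (b * d)) : a / b * c ≤ n * d := by
  rwa [div_mul_eq_mul_div, div_le_iff₀ hb, mul_assoc, mul_comm d]

section LyapunovNorm

variable {E : Type*} [NormedAddCommGroup E] [NormedSpace ℝ E]
  {U V : ℝ → ℝ → E →L[ℝ] E} {P : ℝ → E →L[ℝ] E} {h k : ℝ → ℝ} {t : ℝ}

theorem isNormOn_seminorm (p : Seminorm ℝ E) (hp : ∀ x, p x = 0 → x = 0) : IsNormOn p :=
  ⟨apply_nonneg p, fun x ↦ ⟨hp x, fun hx ↦ hx ▸ map_zero p⟩, map_smul_eq_mul p, map_add_le_add p⟩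

theorem exists_seminorm_eq_lyapD (hh : ∀ τ : Ici t, 0 ≤ h τ / h t)
    (hk : ∀ τ : Icc 0 t, 0 ≤ k t / k τ)
    (hP : ∀ x, BddAbove (range fun τ : Ici t ↦ h τ / h t * ‖U τ t (P t x)‖))
    (hQ : ∀ x, BddAbove (range fun τ : Icc 0 t ↦ k t / k τ * ‖V t τ (x - P t x)‖)) :
    ∃ p : Seminorm ℝ E, ⇑p = lyapD U V P h k t := by
  let T (τ : Ici t) : E →ₗ[ℝ] E := U τ t ∘L P t
  let S (τ : Icc 0 t) : E →ₗ[ℝ] E := V t τ ∘L (ContinuousLinearMap.id ℝ E - P t)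
  refine ⟨weightedSupSeminorm (fun τ : Ici t ↦ h τ / h t) T +
    weightedSupSeminorm (fun τ : Icc 0 t ↦ k t / k τ) S, funext fun x ↦ ?_⟩
  exact congrArg₂ (· + ·) (weightedSupSeminorm_apply (T := T) hh hP x)
    (weightedSupSeminorm_apply (T := S) hk hQ x)

theorem isNormOn_lyapD_of_norm_le (hh : ∀ τ : Ici t, 0 ≤ h τ / h t)
    (hk : ∀ τ : Icc 0 t, 0 ≤ k t / k τ)
    (hP : ∀ x, BddAbove (range fun τ : Ici t ↦ h τ / h t * ‖U τ t (P t x)‖))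
    (hQ : ∀ x, BddAbove (range fun τ : Icc 0 t ↦ k t / k τ * ‖V t τ (x - P t x)‖))
    (hle : ∀ x, ‖x‖ ≤ lyapD U V P h k t x) : IsNormOn (lyapD U V P h k t) := by
  obtain ⟨p, hp⟩ := exists_seminorm_eq_lyapD hh hk hP hQ
  rw [← hp] at hle ⊢
  exact isNormOn_seminorm p fun x hx ↦ norm_le_zero_iff.1 ((hle x).trans_eq hx)

theorem norm_le_lyapD {x : E} (ht : 0 ≤ t) (hh : h t ≠ 0) (hk : k t ≠ 0)
    (hU : U t t (P t x) = P t x) (hV : V t t (x - P t x) = x - P t x)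
    (hP : BddAbove (range fun τ : Ici t ↦ h τ / h t * ‖U τ t (P t x)‖))
    (hQ : BddAbove (range fun τ : Icc 0 t ↦ k t / k τ * ‖V t τ (x - P t x)‖)) :
    ‖x‖ ≤ lyapD U V P h k t x := by
  have hPle := le_ciSup hP ⟨t, self_mem_Ici⟩
  have hQle := le_ciSup hQ ⟨t, ht, le_rfl⟩
  simp only [hU, div_self hh, one_mul] at hPle
  simp only [hV, div_self hk, one_mul] at hQle
  calc ‖x‖ = ‖P t x + (x - P t x)‖ := by rw [add_sub_cancel]
    _ ≤ ‖P t x‖ + ‖x - P t x‖ := norm_add_le _ _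
    _ ≤ lyapD U V P h k t x := add_le_add hPle hQle

theorem lyapD_le {x : E} {C : ℝ} (ht : 0 ≤ t)
    (hP : ∀ τ : Ici t, h τ / h t * ‖U τ t (P t x)‖ ≤ C * ‖P t x‖)
    (hQ : ∀ τ : Icc 0 t, k t / k τ * ‖V t τ (x - P t x)‖ ≤ C * ‖x - P t x‖) :
    lyapD U V P h k t x ≤ C * (‖P t x‖ + ‖x - P t x‖) := by
  have : Nonempty (Icc 0 t) := ⟨⟨t, ht, le_rfl⟩⟩
  rw [mul_add]
  exact add_le_add (ciSup_le hP) (ciSup_le hQ)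

theorem stmt5_general {N : ℝ → ℝ} (hU : ∀ t, 0 ≤ t → U t t = ContinuousLinearMap.id ℝ E)
    (hh : ∀ t, 0 ≤ t → 0 < h t) (hk : ∀ t, 0 ≤ t → 0 < k t)
    (hUV : ∀ t s, 0 ≤ s → s ≤ t → ∀ x, U t s (V t s (x - P t x)) = x - P t x)
    (hPV : ∀ t s, 0 ≤ s → s ≤ t → ∀ x, P s (V t s (x - P t x)) = 0)
    (hstable : ∀ t s, 0 ≤ s → s ≤ t → ∀ x, h t * ‖U t s (P s x)‖ ≤ N s * (h s * ‖P s x‖))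
    (hunstable : ∀ t s, 0 ≤ s → s ≤ t → ∀ x,
      k t * ‖x - P s x‖ ≤ N t * (k s * ‖U t s (x - P s x)‖)) :
    (∀ t, 0 ≤ t → IsNormOn (lyapD U V P h k t)) ∧
      ∀ t, 0 ≤ t → ∀ x, ‖x‖ ≤ lyapD U V P h k t x ∧
        lyapD U V P h k t x ≤ N t * (‖P t x‖ + ‖x - P t x‖) := by
  have hVV (t : ℝ) (ht : 0 ≤ t) (x : E) : V t t (x - P t x) = x - P t x := by
    simpa only [hU t ht, ContinuousLinearMap.id_apply] using hUV t t ht le_rfl x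
  have hPle (t : ℝ) (ht : 0 ≤ t) (x : E) (τ : Ici t) :
      h τ / h t * ‖U τ t (P t x)‖ ≤ N t * ‖P t x‖ :=
    div_mul_le_mul_of_mul_le (hh t ht) (hstable τ t ht τ.2 x)
  have hQle (t : ℝ) (x : E) (τ : Icc 0 t) :
      k t / k τ * ‖V t τ (x - P t x)‖ ≤ N t * ‖x - P t x‖ := by
    have hback := hunstable t τ τ.2.1 τ.2.2 (V t τ (x - P t x))
    rw [hPV t τ τ.2.1 τ.2.2, sub_zero, hUV t τ τ.2.1 τ.2.2] at hback
    exact div_mul_le_mul_of_mul_le (hk τ τ.2.1) hback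
  have hPbdd (t : ℝ) (ht : 0 ≤ t) (x : E) :
      BddAbove (range fun τ : Ici t ↦ h τ / h t * ‖U τ t (P t x)‖) :=
    ⟨_, forall_mem_range.2 (hPle t ht x)⟩
  have hQbdd (t : ℝ) (x : E) :
      BddAbove (range fun τ : Icc 0 t ↦ k t / k τ * ‖V t τ (x - P t x)‖) :=
    ⟨_, forall_mem_range.2 (hQle t x)⟩
  have hlower (t : ℝ) (ht : 0 ≤ t) (x : E) : ‖x‖ ≤ lyapD U V P h k t x :=
    norm_le_lyapD ht (hh t ht).ne' (hk t ht).ne' (by rw [hU t ht, ContinuousLinearMap.id_apply])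
      (hVV t ht x) (hPbdd t ht x) (hQbdd t x)
  refine ⟨fun t ht ↦ ?_, fun t ht x ↦ ⟨hlower t ht x, lyapD_le ht (hPle t ht x) (hQle t x)⟩⟩
  exact isNormOn_lyapD_of_norm_le (fun τ ↦ div_nonneg (hh τ (ht.trans τ.2)).le (hh t ht).le)
    (fun τ ↦ div_nonneg (hk t ht).le (hk τ τ.2.1).le) (hPbdd t ht) (hQbdd t) (hlower t ht)

end LyapunovNorm

/-- Example 3.5 : if `(U,P)` is `(h,k)`-dichotomic with nondecreasing function
`N`, then the Lyapunov type family of norms `lyapD` is compatible with `P`: each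
`|||·|||_t` is a norm and `‖x‖ ≤ |||x|||_t ≤ N t (‖P t x‖ + ‖Q t x‖)`. -/
theorem stmt5 (U V : ℝ → ℝ → X →L[ℝ] X) (P : ℝ → X →L[ℝ] X) (h k : ℝ → ℝ)
    (hU : EvolutionOperator U) (hP : ProjectorFamily P) (hC : CompatibleWith U P)
    (hh : GrowthRate h) (hk : GrowthRate k)
    (hv1 : ∀ t s : ℝ, 0 ≤ s → s ≤ t → ∀ x : X, U t s (V t s (x - P t x)) = x - P t x)
    (hv2 : ∀ t s : ℝ, 0 ≤ s → s ≤ t → ∀ x : X, V t s (U t s (x - P s x)) = x - P s x)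
    (hv3 : ∀ t s t₀ : ℝ, 0 ≤ t₀ → t₀ ≤ s → s ≤ t → ∀ x : X,
      V t t₀ (x - P t x) = V s t₀ (V t s (x - P t x)))
    (hv4 : ∀ t s : ℝ, 0 ≤ s → s ≤ t → ∀ x : X,
      V t s (x - P t x) = V t s (x - P t x) - P s (V t s (x - P t x)))
    (N : ℝ → ℝ) (hN : Nondecr1 N)
    (hdich : ∀ t s : ℝ, 0 ≤ s → s ≤ t → ∀ x : X,
      h t * ‖U t s (P s x)‖ ≤ N s * (h s * ‖P s x‖) ∧
      k t * ‖x - P s x‖ ≤ N t * (k s * ‖U t s (x - P s x)‖)) :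
    (∀ t : ℝ, 0 ≤ t → IsNormOn (lyapD U V P h k t)) ∧
    (∀ t : ℝ, 0 ≤ t → ∀ x : X,
      ‖x‖ ≤ lyapD U V P h k t x ∧
      lyapD U V P h k t x ≤ N t * (‖P t x‖ + ‖x - P t x‖)) :=
  stmt5_general hU.1 (fun t ht ↦ one_pos.trans_le (hh.2.1 t ht))
    (fun t ht ↦ one_pos.trans_le (hk.2.1 t ht)) hv1
    (fun t s hs hst x ↦ sub_eq_self.1 (hv4 t s hs hst x).symm)
    (fun t s hs hst x ↦ (hdich t s hs hst x).1) (fun t s hs hst x ↦ (hdich t s hs hst x).2)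
end

section
/- Let X be a Banach space, U an evolution operator on X, and P a family of projectors compatible with U with complementary family Q and associated map V. Then (U,P) is polynomially dichotomic (i.e., (h,k)-dichotomic with h(t) = (t+1)^α, k(t) = (t+1)^β for some α, β > 0) if and only if there exist a family of norms {|||·|||_t : t ≥ 0} compatible with P and positive constants α, β such that for all t ≥ s ≥ 0 and x ∈ X: (t+1)^α|||U(t,s)P(s)x|||_t ≤ (s+1)^α|||P(s)x|||_s and (t+1)^β|||V(t,s)Q(t)x|||_s ≤ (s+1)^β|||Q(t)x|||_t. -/
open Set Filter Real

variable {X : Type*} [NormedAddCommGroup X] [NormedSpace ℝ X] [CompleteSpace X]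

/-!
The dichotomy inequalities say that the weighted forward orbit `h τ • U τ t (P t x)`, `τ ≥ t`, and
the weighted backward orbit `(k r)⁻¹ • V t r (Q t x)`, `0 ≤ r ≤ t`, are bounded by their values at
time `t` up to the factor `N t`. Their suprema are seminorms, and moving the base point along the
evolution shrinks the set over which the supremum is taken; hence `(h t)⁻¹ * sup_τ + k t * sup_r`
is a norm at time `t` in which the dichotomy holds with constant `1`. Conversely, on the ranges of
`P t` and `Q t` a compatible norm agrees with the original one up to the factor `N t`, so the sharp
inequalities in the new norms give back the dichotomy.
-/

theorem isLUB_range_iSup_seminorm_apply {𝕜 F ι : Type*} [NormedField 𝕜] [AddCommGroup F]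
    [Module 𝕜 F] [Nonempty ι] {p : ι → Seminorm 𝕜 F}
    (hp : ∀ x, BddAbove (range fun i => p i x)) (x : F) :
    IsLUB (range fun i => p i x) ((⨆ i, p i) x) := by
  rw [Seminorm.iSup_apply (Seminorm.bddAbove_range_iff.2 hp)]
  exact isLUB_ciSup (hp x)

section

variable {E : Type*} [NormedAddCommGroup E] [NormedSpace ℝ E]
  {U V : ℝ → ℝ → E →L[ℝ] E} {P : ℝ → E →L[ℝ] E} {h k N : ℝ → ℝ} {t s : ℝ}

theorem isNormOn_add_of_norm_le {p q : Seminorm ℝ E} {a b : ℝ} (ha : 0 ≤ a) (hb : 0 ≤ b)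
    (hle : ∀ x, ‖x‖ ≤ a * p x + b * q x) : IsNormOn fun x => a * p x + b * q x := by
  refine ⟨fun x => (norm_nonneg x).trans (hle x), fun x => ⟨fun hx => ?_, ?_⟩, fun c x => ?_,
    fun x y => ?_⟩
  · exact norm_le_zero_iff.1 ((hle x).trans_eq hx)
  · rintro rfl
    simp only [map_zero, mul_zero, add_zero]
  · simp only [map_smul_eq_mul, Real.norm_eq_abs]
    ring
  · calc a * p (x + y) + b * q (x + y) ≤ a * (p x + p y) + b * (q x + q y) := by
          gcongr <;> exact map_add_le_add _ x y
      _ = a * p x + b * q x + (a * p y + b * q y) := by ring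

theorem ProjectorFamily.apply_apply (hP : ProjectorFamily P) (ht : 0 ≤ t) (x : E) :
    P t (P t x) = P t x :=
  DFunLike.congr_fun (hP t ht) x

theorem ProjectorFamily.apply_sub_apply (hP : ProjectorFamily P) (ht : 0 ≤ t) (x : E) :
    P t (x - P t x) = 0 := by
  rw [map_sub, hP.apply_apply ht, sub_self]

theorem InvariantFor.apply_map_apply (hI : InvariantFor U P) (hP : ProjectorFamily P)
    (hs : 0 ≤ s) (hst : s ≤ t) (x : E) : P t (U t s (P s x)) = U t s (P s x) := by
  rw [← hI t s hs hst, hP.apply_apply hs]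

theorem InvariantFor.apply_map_sub_apply (hI : InvariantFor U P) (hP : ProjectorFamily P)
    (hs : 0 ≤ s) (hst : s ≤ t) (x : E) : P t (U t s (x - P s x)) = 0 := by
  rw [← hI t s hs hst, hP.apply_sub_apply hs, map_zero]

/-- The stable half of a dichotomy with rate `h` and constant `N`. -/
def ForwardBound (U : ℝ → ℝ → E →L[ℝ] E) (P : ℝ → E →L[ℝ] E) (h N : ℝ → ℝ) : Prop :=
  ∀ t s : ℝ, 0 ≤ s → s ≤ t → ∀ x : E, h t * ‖U t s (P s x)‖ ≤ N s * (h s * ‖P s x‖)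

/-- The unstable half of a dichotomy with rate `k` and constant `N`, expressed through the backward
evolution `V` on the ranges of the complementary projectors instead of a lower bound on `U`. -/
def BackwardBound (V : ℝ → ℝ → E →L[ℝ] E) (P : ℝ → E →L[ℝ] E) (k N : ℝ → ℝ) : Prop :=
  ∀ t s : ℝ, 0 ≤ s → s ≤ t → ∀ x : E,
    k t * ‖V t s (x - P t x)‖ ≤ N t * (k s * ‖x - P t x‖)

theorem dichotomic_iff_forwardBound_backwardBound (hP : ProjectorFamily P) (hI : InvariantFor U P)
    (hUV : ∀ t s : ℝ, 0 ≤ s → s ≤ t → ∀ x : E, U t s (V t s (x - P t x)) = x - P t x)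
    (hVU : ∀ t s : ℝ, 0 ≤ s → s ≤ t → ∀ x : E, V t s (U t s (x - P s x)) = x - P s x)
    (hPV : ∀ t s : ℝ, 0 ≤ s → s ≤ t → ∀ x : E, P s (V t s (x - P t x)) = 0) :
    Dichotomic U P h k ↔ ∃ N, Nondecr1 N ∧ ForwardBound U P h N ∧ BackwardBound V P k N := by
  constructor
  · rintro ⟨N, hN, hD⟩
    refine ⟨N, hN, fun t s hs hst x => (hD t s hs hst x).1, fun t s hs hst x => ?_⟩
    have hV := (hD t s hs hst (V t s (x - P t x))).2
    rwa [hPV t s hs hst, sub_zero, hUV t s hs hst] at hV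
  · rintro ⟨N, hN, hF, hB⟩
    refine ⟨N, hN, fun t s hs hst x => ⟨hF t s hs hst x, ?_⟩⟩
    have hU := hB t s hs hst (U t s (x - P s x))
    rwa [hI.apply_map_sub_apply hP hs hst, sub_zero, hVU t s hs hst] at hU

/-- The supremum of the forward orbit of the stable component, weighted by the rate `h`. As with
every unbounded supremum of seminorms, it is `0` unless all these orbits are bounded. -/
noncomputable def stableSeminorm (U : ℝ → ℝ → E →L[ℝ] E) (P : ℝ → E →L[ℝ] E) (h : ℝ → ℝ)
    (t : ℝ) : Seminorm ℝ E :=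
  ⨆ τ : Ici t, (normSeminorm ℝ E).comp (h τ • (U τ t ∘L P t)).toLinearMap

/-- The supremum of the backward orbit of the unstable component, weighted by the inverse of the
rate `k`. As with every unbounded supremum of seminorms, it is `0` unless all these orbits are
bounded. -/
noncomputable def unstableSeminorm (V : ℝ → ℝ → E →L[ℝ] E) (P : ℝ → E →L[ℝ] E) (k : ℝ → ℝ)
    (t : ℝ) : Seminorm ℝ E :=
  ⨆ r : Icc 0 t,
    (normSeminorm ℝ E).comp ((k r)⁻¹ • (V t r ∘L (ContinuousLinearMap.id ℝ E - P t))).toLinearMap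

section Stable

theorem isLUB_stableSeminorm (hh : ∀ t, 0 ≤ t → 0 < h t) (hF : ForwardBound U P h N)
    (ht : 0 ≤ t) (x : E) :
    IsLUB (range fun τ : Ici t => h τ * ‖U τ t (P t x)‖) (stableSeminorm U P h t x) := by
  have horbit (τ : Ici t) (y : E) :
      (normSeminorm ℝ E).comp (h τ • (U τ t ∘L P t)).toLinearMap y = h τ * ‖U τ t (P t y)‖ := by
    simp [norm_smul, abs_of_pos (hh τ (ht.trans τ.2))]
  simp only [← horbit]
  refine isLUB_range_iSup_seminorm_apply (fun y => ⟨N t * (h t * ‖P t y‖), ?_⟩) x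
  exact forall_mem_range.2 fun τ => (horbit τ y).trans_le (hF τ t ht τ.2 y)

theorem stableSeminorm_le (hh : ∀ t, 0 ≤ t → 0 < h t) (hF : ForwardBound U P h N) (ht : 0 ≤ t)
    (x : E) : stableSeminorm U P h t x ≤ N t * (h t * ‖P t x‖) :=
  (isLUB_stableSeminorm hh hF ht x).2 (forall_mem_range.2 fun τ => hF τ t ht τ.2 x)

theorem stableSeminorm_eq_zero (hh : ∀ t, 0 ≤ t → 0 < h t) (hF : ForwardBound U P h N)
    (ht : 0 ≤ t) {x : E} (hx : P t x = 0) : stableSeminorm U P h t x = 0 := by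
  refine le_antisymm ((stableSeminorm_le hh hF ht x).trans_eq ?_) (apply_nonneg _ x)
  rw [hx, norm_zero, mul_zero, mul_zero]

theorem mul_norm_le_stableSeminorm (hU : EvolutionOperator U) (hh : ∀ t, 0 ≤ t → 0 < h t)
    (hF : ForwardBound U P h N) (ht : 0 ≤ t) (x : E) :
    h t * ‖P t x‖ ≤ stableSeminorm U P h t x := by
  have hle := (isLUB_stableSeminorm hh hF ht x).1 ⟨⟨t, self_mem_Ici⟩, rfl⟩
  simpa only [hU.1 t ht, ContinuousLinearMap.id_apply] using hle

theorem stableSeminorm_map_le (hU : EvolutionOperator U) (hP : ProjectorFamily P)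
    (hI : InvariantFor U P) (hh : ∀ t, 0 ≤ t → 0 < h t) (hF : ForwardBound U P h N)
    (hs : 0 ≤ s) (hst : s ≤ t) (x : E) :
    stableSeminorm U P h t (U t s (P s x)) ≤ stableSeminorm U P h s (P s x) := by
  refine (isLUB_stableSeminorm hh hF (hs.trans hst) _).2 (forall_mem_range.2 fun τ => ?_)
  have hUτ : U τ t (P t (U t s (P s x))) = U τ s (P s (P s x)) := by
    rw [hI.apply_map_apply hP hs hst, hP.apply_apply hs, hU.2 τ t s hs hst τ.2,
      ContinuousLinearMap.comp_apply]
  rw [hUτ]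
  exact (isLUB_stableSeminorm hh hF hs (P s x)).1 ⟨⟨τ, hst.trans τ.2⟩, rfl⟩

end Stable

section Unstable

theorem BackwardBound.inv_mul_norm_le (hk : ∀ t, 0 ≤ t → 0 < k t) (hB : BackwardBound V P k N)
    (hs : 0 ≤ s) (hst : s ≤ t) (x : E) :
    (k s)⁻¹ * ‖V t s (x - P t x)‖ ≤ (k t)⁻¹ * (N t * ‖x - P t x‖) := by
  rw [inv_mul_le_iff₀ (hk s hs), mul_left_comm, le_inv_mul_iff₀ (hk t (hs.trans hst)),
    mul_left_comm]
  exact hB t s hs hst x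

theorem isLUB_unstableSeminorm (hk : ∀ t, 0 ≤ t → 0 < k t) (hB : BackwardBound V P k N)
    (ht : 0 ≤ t) (x : E) :
    IsLUB (range fun r : Icc 0 t => (k r)⁻¹ * ‖V t r (x - P t x)‖)
      (unstableSeminorm V P k t x) := by
  have : Nonempty (Icc 0 t) := ⟨⟨t, right_mem_Icc.2 ht⟩⟩
  have horbit (r : Icc 0 t) (y : E) :
      (normSeminorm ℝ E).comp
        ((k r)⁻¹ • (V t r ∘L (ContinuousLinearMap.id ℝ E - P t))).toLinearMap y =
          (k r)⁻¹ * ‖V t r (y - P t y)‖ := by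
    simp [norm_smul, abs_of_pos (hk r r.2.1)]
  simp only [← horbit]
  refine isLUB_range_iSup_seminorm_apply (fun y => ⟨(k t)⁻¹ * (N t * ‖y - P t y‖), ?_⟩) x
  exact forall_mem_range.2 fun r => (horbit r y).trans_le (hB.inv_mul_norm_le hk r.2.1 r.2.2 y)

theorem unstableSeminorm_le (hk : ∀ t, 0 ≤ t → 0 < k t) (hB : BackwardBound V P k N)
    (ht : 0 ≤ t) (x : E) :
    unstableSeminorm V P k t x ≤ (k t)⁻¹ * (N t * ‖x - P t x‖) :=
  (isLUB_unstableSeminorm hk hB ht x).2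
    (forall_mem_range.2 fun r => hB.inv_mul_norm_le hk r.2.1 r.2.2 x)

theorem unstableSeminorm_eq_zero (hk : ∀ t, 0 ≤ t → 0 < k t) (hB : BackwardBound V P k N)
    (ht : 0 ≤ t) {x : E} (hx : P t x = x) : unstableSeminorm V P k t x = 0 := by
  refine le_antisymm ((unstableSeminorm_le hk hB ht x).trans_eq ?_) (apply_nonneg _ x)
  rw [hx, sub_self, norm_zero, mul_zero, mul_zero]

theorem inv_mul_norm_le_unstableSeminorm (hVV : ∀ x : E, V t t (x - P t x) = x - P t x)
    (hk : ∀ t, 0 ≤ t → 0 < k t) (hB : BackwardBound V P k N) (ht : 0 ≤ t) (x : E) :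
    (k t)⁻¹ * ‖x - P t x‖ ≤ unstableSeminorm V P k t x := by
  have hle := (isLUB_unstableSeminorm hk hB ht x).1 ⟨⟨t, right_mem_Icc.2 ht⟩, rfl⟩
  simpa only [hVV] using hle

theorem unstableSeminorm_map_le (hP : ProjectorFamily P)
    (hVcomp : ∀ t s t₀ : ℝ, 0 ≤ t₀ → t₀ ≤ s → s ≤ t → ∀ x : E,
      V t t₀ (x - P t x) = V s t₀ (V t s (x - P t x)))
    (hPV : ∀ t s : ℝ, 0 ≤ s → s ≤ t → ∀ x : E, P s (V t s (x - P t x)) = 0)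
    (hk : ∀ t, 0 ≤ t → 0 < k t) (hB : BackwardBound V P k N) (hs : 0 ≤ s) (hst : s ≤ t) (x : E) :
    unstableSeminorm V P k s (V t s (x - P t x)) ≤ unstableSeminorm V P k t (x - P t x) := by
  refine (isLUB_unstableSeminorm hk hB hs _).2 (forall_mem_range.2 fun r => ?_)
  have hVr : V s r (V t s (x - P t x) - P s (V t s (x - P t x))) =
      V t r ((x - P t x) - P t (x - P t x)) := by
    rw [hPV t s hs hst, sub_zero, hP.apply_sub_apply (hs.trans hst), sub_zero,
      hVcomp t s r r.2.1 r.2.2 hst]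
  rw [hVr]
  exact (isLUB_unstableSeminorm hk hB (hs.trans hst) (x - P t x)).1
    ⟨⟨r, r.2.1, r.2.2.trans hst⟩, rfl⟩

end Unstable

/-- The Lyapunov norm at time `t` adapted to a dichotomy with rates `h` and `k`. -/
noncomputable def lyapunovNorm (U V : ℝ → ℝ → E →L[ℝ] E) (P : ℝ → E →L[ℝ] E) (h k : ℝ → ℝ)
    (t : ℝ) (x : E) : ℝ :=
  (h t)⁻¹ * stableSeminorm U P h t x + k t * unstableSeminorm V P k t x

section Lyapunov

theorem norm_le_lyapunovNorm (hU : EvolutionOperator U)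
    (hVV : ∀ x : E, V t t (x - P t x) = x - P t x)
    (hh : ∀ t, 0 ≤ t → 0 < h t) (hk : ∀ t, 0 ≤ t → 0 < k t)
    (hF : ForwardBound U P h N) (hB : BackwardBound V P k N) (ht : 0 ≤ t) (x : E) :
    ‖x‖ ≤ lyapunovNorm U V P h k t x :=
  calc ‖x‖ = ‖P t x + (x - P t x)‖ := by rw [add_sub_cancel]
    _ ≤ ‖P t x‖ + ‖x - P t x‖ := norm_add_le _ _
    _ ≤ _ := add_le_add
      ((le_inv_mul_iff₀ (hh t ht)).2 (mul_norm_le_stableSeminorm hU hh hF ht x))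
      ((inv_mul_le_iff₀ (hk t ht)).1 (inv_mul_norm_le_unstableSeminorm hVV hk hB ht x))

theorem lyapunovNorm_le (hh : ∀ t, 0 ≤ t → 0 < h t) (hk : ∀ t, 0 ≤ t → 0 < k t)
    (hF : ForwardBound U P h N) (hB : BackwardBound V P k N) (ht : 0 ≤ t) (x : E) :
    lyapunovNorm U V P h k t x ≤ N t * (‖P t x‖ + ‖x - P t x‖) := by
  have hstable : (h t)⁻¹ * stableSeminorm U P h t x ≤ N t * ‖P t x‖ := by
    rw [inv_mul_le_iff₀ (hh t ht), mul_left_comm]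
    exact stableSeminorm_le hh hF ht x
  have hunstable : k t * unstableSeminorm V P k t x ≤ N t * ‖x - P t x‖ :=
    (le_inv_mul_iff₀ (hk t ht)).1 (unstableSeminorm_le hk hB ht x)
  rw [mul_add]
  exact add_le_add hstable hunstable

theorem compatibleNorms_lyapunovNorm (hU : EvolutionOperator U)
    (hVV : ∀ t, 0 ≤ t → ∀ x : E, V t t (x - P t x) = x - P t x)
    (hh : ∀ t, 0 ≤ t → 0 < h t) (hk : ∀ t, 0 ≤ t → 0 < k t) (hN : Nondecr1 N)
    (hF : ForwardBound U P h N) (hB : BackwardBound V P k N) :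
    CompatibleNorms P (lyapunovNorm U V P h k) := by
  have hle (t : ℝ) (ht : 0 ≤ t) := norm_le_lyapunovNorm hU (hVV t ht) hh hk hF hB ht
  exact ⟨fun t ht => isNormOn_add_of_norm_le (inv_nonneg.2 (hh t ht).le) (hk t ht).le (hle t ht),
    N, hN, fun t ht x => ⟨hle t ht x, lyapunovNorm_le hh hk hF hB ht x⟩⟩

theorem mul_lyapunovNorm_of_apply_eq_self (hh : ∀ t, 0 ≤ t → 0 < h t)
    (hk : ∀ t, 0 ≤ t → 0 < k t) (hB : BackwardBound V P k N) (ht : 0 ≤ t) {x : E}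
    (hx : P t x = x) : h t * lyapunovNorm U V P h k t x = stableSeminorm U P h t x := by
  rw [lyapunovNorm, unstableSeminorm_eq_zero hk hB ht hx, mul_zero, add_zero,
    mul_inv_cancel_left₀ (hh t ht).ne']

theorem lyapunovNorm_of_apply_eq_zero (hh : ∀ t, 0 ≤ t → 0 < h t) (hF : ForwardBound U P h N)
    (ht : 0 ≤ t) {x : E} (hx : P t x = 0) :
    lyapunovNorm U V P h k t x = k t * unstableSeminorm V P k t x := by
  rw [lyapunovNorm, stableSeminorm_eq_zero hh hF ht hx, mul_zero, zero_add]

theorem mul_lyapunovNorm_forward_le (hU : EvolutionOperator U) (hP : ProjectorFamily P)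
    (hI : InvariantFor U P) (hh : ∀ t, 0 ≤ t → 0 < h t) (hk : ∀ t, 0 ≤ t → 0 < k t)
    (hF : ForwardBound U P h N) (hB : BackwardBound V P k N) (hs : 0 ≤ s) (hst : s ≤ t) (x : E) :
    h t * lyapunovNorm U V P h k t (U t s (P s x)) ≤
      h s * lyapunovNorm U V P h k s (P s x) := by
  rw [mul_lyapunovNorm_of_apply_eq_self hh hk hB (hs.trans hst) (hI.apply_map_apply hP hs hst x),
    mul_lyapunovNorm_of_apply_eq_self hh hk hB hs (hP.apply_apply hs x)]
  exact stableSeminorm_map_le hU hP hI hh hF hs hst x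

theorem mul_lyapunovNorm_backward_le (hP : ProjectorFamily P)
    (hVcomp : ∀ t s t₀ : ℝ, 0 ≤ t₀ → t₀ ≤ s → s ≤ t → ∀ x : E,
      V t t₀ (x - P t x) = V s t₀ (V t s (x - P t x)))
    (hPV : ∀ t s : ℝ, 0 ≤ s → s ≤ t → ∀ x : E, P s (V t s (x - P t x)) = 0)
    (hh : ∀ t, 0 ≤ t → 0 < h t) (hk : ∀ t, 0 ≤ t → 0 < k t)
    (hF : ForwardBound U P h N) (hB : BackwardBound V P k N) (hs : 0 ≤ s) (hst : s ≤ t) (x : E) :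
    k t * lyapunovNorm U V P h k s (V t s (x - P t x)) ≤
      k s * lyapunovNorm U V P h k t (x - P t x) := by
  have ht := hs.trans hst
  rw [lyapunovNorm_of_apply_eq_zero hh hF hs (hPV t s hs hst x),
    lyapunovNorm_of_apply_eq_zero hh hF ht (hP.apply_sub_apply ht x), mul_left_comm]
  have hks := (hk s hs).le
  have hkt := (hk t ht).le
  gcongr
  exact unstableSeminorm_map_le hP hVcomp hPV hk hB hs hst x

end Lyapunov

theorem CompatibleNorms.exists_forwardBound_backwardBound {nn : ℝ → E → ℝ}
    (hnn : CompatibleNorms P nn) (hP : ProjectorFamily P)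
    (hh : ∀ t, 0 ≤ t → 0 < h t) (hk : ∀ t, 0 ≤ t → 0 < k t)
    (hfwd : ∀ t s : ℝ, 0 ≤ s → s ≤ t → ∀ x : E,
      h t * nn t (U t s (P s x)) ≤ h s * nn s (P s x))
    (hbwd : ∀ t s : ℝ, 0 ≤ s → s ≤ t → ∀ x : E,
      k t * nn s (V t s (x - P t x)) ≤ k s * nn t (x - P t x)) :
    ∃ N, Nondecr1 N ∧ ForwardBound U P h N ∧ BackwardBound V P k N := by
  obtain ⟨-, N, hN, hnorm⟩ := hnn
  have hrange (t : ℝ) (ht : 0 ≤ t) (x : E) : nn t (P t x) ≤ N t * ‖P t x‖ := by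
    simpa only [hP.apply_apply ht, sub_self, norm_zero, add_zero] using (hnorm t ht (P t x)).2
  have hker (t : ℝ) (ht : 0 ≤ t) (x : E) : nn t (x - P t x) ≤ N t * ‖x - P t x‖ := by
    simpa only [hP.apply_sub_apply ht, sub_zero, norm_zero, zero_add] using
      (hnorm t ht (x - P t x)).2
  refine ⟨N, hN, fun t s hs hst x => ?_, fun t s hs hst x => ?_⟩
  · calc h t * ‖U t s (P s x)‖ ≤ h t * nn t (U t s (P s x)) :=
          mul_le_mul_of_nonneg_left (hnorm t (hs.trans hst) _).1 (hh t (hs.trans hst)).le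
      _ ≤ h s * nn s (P s x) := hfwd t s hs hst x
      _ ≤ h s * (N s * ‖P s x‖) := mul_le_mul_of_nonneg_left (hrange s hs x) (hh s hs).le
      _ = N s * (h s * ‖P s x‖) := mul_left_comm _ _ _
  · calc k t * ‖V t s (x - P t x)‖ ≤ k t * nn s (V t s (x - P t x)) :=
          mul_le_mul_of_nonneg_left (hnorm s hs _).1 (hk t (hs.trans hst)).le
      _ ≤ k s * nn t (x - P t x) := hbwd t s hs hst x
      _ ≤ k s * (N t * ‖x - P t x‖) :=
          mul_le_mul_of_nonneg_left (hker t (hs.trans hst) x) (hk s hs).le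
      _ = N t * (k s * ‖x - P t x‖) := mul_left_comm _ _ _

theorem stmt9_general (hU : EvolutionOperator U) (hP : ProjectorFamily P) (hI : InvariantFor U P)
    (hUV : ∀ t s : ℝ, 0 ≤ s → s ≤ t → ∀ x : E, U t s (V t s (x - P t x)) = x - P t x)
    (hVU : ∀ t s : ℝ, 0 ≤ s → s ≤ t → ∀ x : E, V t s (U t s (x - P s x)) = x - P s x)
    (hVcomp : ∀ t s t₀ : ℝ, 0 ≤ t₀ → t₀ ≤ s → s ≤ t → ∀ x : E,
      V t t₀ (x - P t x) = V s t₀ (V t s (x - P t x)))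
    (hVker : ∀ t s : ℝ, 0 ≤ s → s ≤ t → ∀ x : E,
      V t s (x - P t x) = V t s (x - P t x) - P s (V t s (x - P t x)))
    (hh : ∀ t, 0 ≤ t → 0 < h t) (hk : ∀ t, 0 ≤ t → 0 < k t) :
    Dichotomic U P h k ↔
      ∃ nn : ℝ → E → ℝ, CompatibleNorms P nn ∧
        ∀ t s : ℝ, 0 ≤ s → s ≤ t → ∀ x : E,
          h t * nn t (U t s (P s x)) ≤ h s * nn s (P s x) ∧
          k t * nn s (V t s (x - P t x)) ≤ k s * nn t (x - P t x) := by
  have hPV (t s : ℝ) (hs : 0 ≤ s) (hst : s ≤ t) (x : E) : P s (V t s (x - P t x)) = 0 :=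
    sub_eq_self.1 (hVker t s hs hst x).symm
  have hVV (t : ℝ) (ht : 0 ≤ t) (x : E) : V t t (x - P t x) = x - P t x := by
    simpa only [hU.1 t ht, ContinuousLinearMap.id_apply] using hUV t t ht le_rfl x
  rw [dichotomic_iff_forwardBound_backwardBound hP hI hUV hVU hPV]
  constructor
  · rintro ⟨N, hN, hF, hB⟩
    exact ⟨lyapunovNorm U V P h k, compatibleNorms_lyapunovNorm hU hVV hh hk hN hF hB,
      fun t s hs hst x => ⟨mul_lyapunovNorm_forward_le hU hP hI hh hk hF hB hs hst x,
        mul_lyapunovNorm_backward_le hP hVcomp hPV hh hk hF hB hs hst x⟩⟩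
  · rintro ⟨nn, hnn, H⟩
    exact hnn.exists_forwardBound_backwardBound hP hh hk
      (fun t s hs hst x => (H t s hs hst x).1) fun t s hs hst x => (H t s hs hst x).2

end

/-- Corollary 3.9 : `(U,P)` is polynomially dichotomic iff there exist a family
of norms compatible with `P` and constants `α, β > 0` satisfying `(pd₁)`, `(pd₂)`. -/
theorem stmt9 (U V : ℝ → ℝ → X →L[ℝ] X) (P : ℝ → X →L[ℝ] X)
    (hU : EvolutionOperator U) (hP : ProjectorFamily P) (hC : CompatibleWith U P)
    (hv1 : ∀ t s : ℝ, 0 ≤ s → s ≤ t → ∀ x : X, U t s (V t s (x - P t x)) = x - P t x)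
    (hv2 : ∀ t s : ℝ, 0 ≤ s → s ≤ t → ∀ x : X, V t s (U t s (x - P s x)) = x - P s x)
    (hv3 : ∀ t s t₀ : ℝ, 0 ≤ t₀ → t₀ ≤ s → s ≤ t → ∀ x : X,
      V t t₀ (x - P t x) = V s t₀ (V t s (x - P t x)))
    (hv4 : ∀ t s : ℝ, 0 ≤ s → s ≤ t → ∀ x : X,
      V t s (x - P t x) = V t s (x - P t x) - P s (V t s (x - P t x)))
    :
    (∃ α β : ℝ, 0 < α ∧ 0 < β ∧
      Dichotomic U P (fun t => (t + 1) ^ α) (fun t => (t + 1) ^ β)) ↔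
      ∃ nn : ℝ → X → ℝ, CompatibleNorms P nn ∧
        ∃ α β : ℝ, 0 < α ∧ 0 < β ∧
          ∀ t s : ℝ, 0 ≤ s → s ≤ t → ∀ x : X,
            (t + 1) ^ α * nn t (U t s (P s x)) ≤ (s + 1) ^ α * nn s (P s x) ∧
            (t + 1) ^ β * nn s (V t s (x - P t x)) ≤
              (s + 1) ^ β * nn t (x - P t x) := by
  have hpos (γ t : ℝ) (ht : 0 ≤ t) : 0 < (t + 1) ^ γ := rpow_pos_of_pos (by linarith) γ
  simp only [stmt9_general hU hP hC.1 hv1 hv2 hv3 hv4 (hpos _) (hpos _)]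
  exact ⟨fun ⟨α, β, hα, hβ, nn, hnn, H⟩ => ⟨nn, hnn, α, β, hα, hβ, H⟩,
    fun ⟨nn, hnn, α, β, hα, hβ, H⟩ => ⟨α, β, hα, hβ, nn, hnn, H⟩⟩
end
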